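/- Let ε be a nonzero real number. Then the sequence n ↦ ε^n · B_{n−1} is not exponentially bounded: for all real numbers C > 0 and K > 0 there exists n ≥ 1 such that |ε^n · B_{n−1}| > C · K^n. -/

import Mathlib

theorem fact_le_bern_aux {k : ℕ} (hk : k ≠ 0) :
    ((2 * k).factorial : ℝ) ≤ (2 * Real.pi) ^ (2 * k) * |(bernoulli (2 * k) : ℝ)| := by
  have h := hasSum_zeta_nat hk
  have h1 := le_hasSum h 1 (fun j _ => by positivity)
  have h2 := h1.trans (le_abs_self _)
  have hf : (0 : ℝ) < ((2 * k).factorial : ℝ) := by positivity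
  rw [abs_div, abs_mul, abs_mul, abs_mul, abs_pow, abs_neg, abs_one, one_pow, one_mul,
    abs_of_pos hf, le_div_iff₀ hf, abs_of_pos (by positivity : (0 : ℝ) < 2 ^ (2 * k - 1)),
    abs_of_pos (by positivity : (0 : ℝ) < Real.pi ^ (2 * k))] at h2
  simp only [Nat.cast_one, one_pow, div_one, one_mul] at h2
  rw [mul_pow]
  refine h2.trans ?_
  gcongr
  · norm_num
  · omega

theorem bushy_log_coefficients_not_exponentially_bounded
    (ε : ℝ) (hε : ε ≠ 0) :
    ∀ C > (0 : ℝ), ∀ K > (0 : ℝ), ∃ n : ℕ, 1 ≤ n ∧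
      |ε ^ n * (bernoulli (n - 1) : ℝ)| > C * K ^ n := by
  intro C hC K hK
  have he : 0 < |ε| := abs_pos.mpr hε
  have ht := FloorSemiring.tendsto_pow_div_factorial_atTop (2 * Real.pi * K / |ε|)
  have hev := ht.eventually (gt_mem_nhds (show (0 : ℝ) < |ε| / (C * K) by positivity))
  obtain ⟨N, hN⟩ := Filter.eventually_atTop.mp hev
  have h := hN (2 * (N + 1)) (by omega)
  have hb := fact_le_bern_aux (Nat.succ_ne_zero N)
  refine ⟨2 * (N + 1) + 1, by omega, ?_⟩
  rw [Nat.add_sub_cancel, abs_mul, abs_pow]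
  simp only [Nat.succ_eq_add_one] at hb
  generalize 2 * (N + 1) = m at *
  have hf : (0 : ℝ) < (m.factorial : ℝ) := by positivity
  have hp : (0 : ℝ) < (2 * Real.pi) ^ m := by positivity
  have hem : (0 : ℝ) < |ε| ^ m := by positivity
  rw [div_lt_div_iff₀ hf (by positivity), div_pow, mul_pow, div_mul_eq_mul_div,
    div_lt_iff₀ hem] at h
  have h3 : |ε| * (m.factorial : ℝ) * |ε| ^ m
      ≤ |ε| * ((2 * Real.pi) ^ m * |(bernoulli m : ℝ)|) * |ε| ^ m := by gcongr
  have h4 := h.trans_le h3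
  refine lt_of_mul_lt_mul_left (a := (2 * Real.pi) ^ m) ?_ hp.le
  rw [pow_succ, pow_succ]
  linarith
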